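/- Let n be a positive natural number and let G be an antisymmetric n×n real matrix. The 2n×2n block matrix A = [[0, I], [-I, G]] is invertible, with inverse A⁻¹ = [[G, -I], [I, 0]]. Moreover, for any symmetric n×n real matrix S and any scalar c ∈ ℝ, the 2n×2n block matrix J = [[I, 0], [-c·S, I]] (the Jacobian of the exact position sub-flow (θ, p) ↦ (θ, p - c·∇U(θ)) when S is the Hessian of U) is symplectic with respect to A: Jᵀ · A⁻¹ · J = A⁻¹. -/

import Mathlib

open Matrix

/-- The magnetic HMC structure matrix `A = [[0, I], [-I, G]]` is invertible with inverse
`[[G, -I], [I, 0]]`, and the Jacobian `[[I, 0], [-c S, I]]` of the exact position sub-flow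
(with `S` symmetric) is symplectic with respect to `A`. -/
theorem magnetic_structure_inverse_and_position_subflow_symplectic
    (n : ℕ) (hn : 0 < n)
    (G : Matrix (Fin n) (Fin n) ℝ) (hG : Gᵀ = -G)
    (A : Matrix (Fin n ⊕ Fin n) (Fin n ⊕ Fin n) ℝ)
    (hA : A = Matrix.fromBlocks 0 1 (-1) G) :
    IsUnit A.det ∧
    A⁻¹ = Matrix.fromBlocks G (-1) 1 0 ∧
    ∀ (S : Matrix (Fin n) (Fin n) ℝ) (c : ℝ), Sᵀ = S →
      (Matrix.fromBlocks 1 0 (-(c • S)) 1)ᵀ * A⁻¹ * Matrix.fromBlocks 1 0 (-(c • S)) 1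
        = A⁻¹ := by
  have h : A * Matrix.fromBlocks G (-1) 1 0 = 1 := by
    rw [hA, Matrix.fromBlocks_multiply, ← Matrix.fromBlocks_one]
    simp
  have hinv : A⁻¹ = Matrix.fromBlocks G (-1) 1 0 := Matrix.inv_eq_right_inv h
  refine ⟨Matrix.isUnit_det_of_right_inverse h, hinv, ?_⟩
  intro S c hS
  rw [hinv, Matrix.fromBlocks_transpose, Matrix.fromBlocks_multiply, Matrix.fromBlocks_multiply]
  simp [hS]
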